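/- Let F be an algebraically closed field of characteristic p > 0. The Weyl algebra A_n(F) is an Azumaya algebra of degree p^n over its center, and its center is the polynomial algebra F[x_1^p, ..., x_n^p, y_1^p, ..., y_n^p]. In particular, A_n(F) is a PI domain whose quotient division algebra has degree p^n. -/

import Mathlib

open TensorProduct

/-- The defining relations of the `n`-th Weyl algebra: generators `xᵢ = .inl i`,
`yᵢ = .inr i`, relations `[xᵢ,xⱼ] = [yᵢ,yⱼ] = 0` and `[yᵢ,xⱼ] = δᵢⱼ`. -/
inductive WeylRel (R : Type) [CommRing R] (n : ℕ) :
    FreeAlgebra R (Fin n ⊕ Fin n) → FreeAlgebra R (Fin n ⊕ Fin n) → Prop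
  | xx (i j : Fin n) : WeylRel R n (FreeAlgebra.ι R (Sum.inl i) * FreeAlgebra.ι R (Sum.inl j))
      (FreeAlgebra.ι R (Sum.inl j) * FreeAlgebra.ι R (Sum.inl i))
  | yy (i j : Fin n) : WeylRel R n (FreeAlgebra.ι R (Sum.inr i) * FreeAlgebra.ι R (Sum.inr j))
      (FreeAlgebra.ι R (Sum.inr j) * FreeAlgebra.ι R (Sum.inr i))
  | yx (i j : Fin n) : WeylRel R n (FreeAlgebra.ι R (Sum.inr i) * FreeAlgebra.ι R (Sum.inl j))
      (FreeAlgebra.ι R (Sum.inl j) * FreeAlgebra.ι R (Sum.inr i) + if i = j then 1 else 0)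

/-- The `n`-th Weyl algebra `A_n(R)` over a commutative ring `R`. -/
def WeylAlgebra (R : Type) [CommRing R] (n : ℕ) : Type := RingQuot (WeylRel R n)

noncomputable instance (R : Type) [CommRing R] (n : ℕ) : Ring (WeylAlgebra R n) :=
  inferInstanceAs (Ring (RingQuot (WeylRel R n)))

noncomputable instance (S R : Type) [CommSemiring S] [CommRing R] [Algebra S R] (n : ℕ) :
    Algebra S (WeylAlgebra R n) :=
  inferInstanceAs (Algebra S (RingQuot (WeylRel R n)))

namespace WeylAlgebra

/-- The generator `xᵢ` of the Weyl algebra. -/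
noncomputable def X {R : Type} [CommRing R] {n : ℕ} (i : Fin n) : WeylAlgebra R n :=
  RingQuot.mkRingHom (WeylRel R n) (FreeAlgebra.ι R (Sum.inl i))

/-- The generator `yᵢ` of the Weyl algebra. -/
noncomputable def Y {R : Type} [CommRing R] {n : ℕ} (i : Fin n) : WeylAlgebra R n :=
  RingQuot.mkRingHom (WeylRel R n) (FreeAlgebra.ι R (Sum.inr i))

end WeylAlgebra

/-- `B` satisfies a polynomial identity over `F`: some nonzero noncommutative polynomial
in finitely many variables vanishes identically on `B`. -/
def IsPIAlgebra (F : Type) [CommRing F] (B : Type) [Ring B] [Algebra F B] : Prop :=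
  ∃ (m : ℕ) (f : FreeAlgebra F (Fin m)), f ≠ 0 ∧
    ∀ v : Fin m → B, FreeAlgebra.lift F v f = 0

set_option maxHeartbeats 1000000
set_option synthInstance.maxHeartbeats 400000

section Azumaya

variable (F W : Type) [Field F] [Ring W] [Algebra F W]

local notation "Z" => Subalgebra.center F W

/-- The multiplication endomorphism `x ↦ a x b` of `W`, as a `Z(W)`-linear map. -/
noncomputable def sandwich (a : W) (b : Wᵐᵒᵖ) : W →ₗ[Z] W where
  toFun x := a * x * b.unop
  map_add' x y := by noncomm_ring
  map_smul' z x := by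
    have hz : ∀ w : W, w * (z : W) = (z : W) * w := Subalgebra.mem_center_iff.mp z.2
    simp only [Subalgebra.smul_def, smul_eq_mul, RingHom.id_apply]
    rw [← mul_assoc, hz a]
    noncomm_ring

/-- The natural map `W ⊗[Z] Wᵒᵖ → End_Z(W)`, `a ⊗ b ↦ (x ↦ a x b)`, whose bijectivity
(together with finite generation and projectivity over `Z`) expresses that `W` is an
Azumaya algebra over its center `Z`. -/
noncomputable def azumayaMap : W ⊗[Z] Wᵐᵒᵖ →ₗ[Z] (W →ₗ[Z] W) :=
  TensorProduct.lift (LinearMap.mk₂ Z (sandwich F W)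
    (fun a a' b => by ext x; simp [sandwich, add_mul])
    (fun z a b => by
      ext x
      simp [sandwich, Subalgebra.smul_def, smul_eq_mul, mul_assoc])
    (fun a b b' => by ext x; simp [sandwich, mul_add])
    (fun z a b => by
      have hz : ∀ w : W, w * (z : W) = (z : W) * w := Subalgebra.mem_center_iff.mp z.2
      ext x
      show a * x * (z • b).unop = z • (a * x * b.unop)
      rw [MulOpposite.unop_smul, Subalgebra.smul_def, Subalgebra.smul_def, smul_eq_mul,
        smul_eq_mul, ← mul_assoc, hz (a * x)]
      noncomm_ring))

end Azumaya

/-!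
Writing every element of the Weyl algebra with all `yᵢ` to the right of all `xⱼ` identifies it, as a
module, with the polynomials in `2n` variables; this is its normally ordered symbol. On symbols,
left multiplication by `xᵢ` and right multiplication by `yᵢ` are multiplications by variables, while
the commutators with `yᵢ` and `xᵢ` are the partial derivatives. The symbol of a product has
the leading term of the product of the symbols, so there are no zero divisors. The center consists
of the elements whose symbols are killed by all partial derivatives; in characteristic `p` these are
the polynomials in the `p`-th powers of the variables.

The monomials with exponents below `p` span over the center. Since `(p - 1)! = -1`, the operator
`-∂ᵢ^(p-1) xᵢ^(p-1-a)` picks out the exponent `a` of the `i`-th variable, so the coordinate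
functionals of these monomials are sums of maps `w ↦ a w b`. Such maps are linear over the center
and extend to every overring. Hence the monomials form a basis, every center-linear endomorphism is
a sum of maps `w ↦ a w b`, and the same monomials remain a basis of the quotient division ring over
its center. Being finite free over its center, the algebra satisfies a standard identity.
-/

section MultiplicationAlgebra

variable (R W : Type*) [CommRing R] [Ring W] [Algebra R W]

/-- The multiplication algebra of `W`: the algebra of `R`-linear endomorphisms of `W` generated by
all left and right multiplications, encoded as the image of `W ⊗[R] Wᵐᵒᵖ`. -/
noncomputable def multiplicationAlgebra : Subalgebra R (Module.End R W) :=
  (AlgHom.mulLeftRight R W).range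

variable {R W}

lemma mulLeft_mem_multiplicationAlgebra (a : W) :
    LinearMap.mulLeft R a ∈ multiplicationAlgebra R W :=
  ⟨a ⊗ₜ 1, LinearMap.ext fun x => by simp⟩

lemma mulRight_mem_multiplicationAlgebra (a : W) :
    LinearMap.mulRight R a ∈ multiplicationAlgebra R W :=
  ⟨1 ⊗ₜ MulOpposite.op a, LinearMap.ext fun x => by simp⟩

lemma map_center_smul_of_mem_multiplicationAlgebra {T : Module.End R W}
    (hT : T ∈ multiplicationAlgebra R W) (z : Subalgebra.center R W) (x : W) :
    T (z • x) = z • T x := by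
  obtain ⟨u, rfl⟩ := hT
  induction u using TensorProduct.induction_on with
  | zero => simp
  | add u v hu hv => simp_all
  | tmul a b =>
    have hz : a * (z : W) = z * a := Subalgebra.mem_center_iff.mp z.2 a
    simp [Subalgebra.smul_def, ← mul_assoc, hz]

lemma exists_mem_multiplicationAlgebra_apply_map {Q : Type*} [Ring Q] [Algebra R Q]
    (ι : W →ₐ[R] Q) {T : Module.End R W} (hT : T ∈ multiplicationAlgebra R W) :
    ∃ T' ∈ multiplicationAlgebra R Q, ∀ x, T' (ι x) = ι (T x) := by
  obtain ⟨u, rfl⟩ := hT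
  refine ⟨_, ⟨Algebra.TensorProduct.map ι (AlgHom.op ι) u, rfl⟩, fun x => ?_⟩
  induction u using TensorProduct.induction_on with
  | zero => simp
  | add u v hu hv => simp_all
  | tmul a b => simp

variable {I : Type*} {b : I → W}

variable (R) in
/-- A family `b` has an inner dual if its coordinate functionals are induced by elements of the
multiplication algebra. Since these operators are linear over the center and extend along algebra
homomorphisms, this makes `b` independent over the center of every overring of `W`. -/
def HasInnerDual (b : I → W) : Prop :=
  ∀ i, ∃ T ∈ multiplicationAlgebra R W, T (b i) = 1 ∧ ∀ j ≠ i, T (b j) = 0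

lemma HasInnerDual.map {Q : Type*} [Ring Q] [Algebra R Q] (hb : HasInnerDual R b)
    (ι : W →ₐ[R] Q) : HasInnerDual R (ι ∘ b) := by
  intro i
  obtain ⟨T, hT, hTi, hTj⟩ := hb i
  obtain ⟨T', hT', hext⟩ := exists_mem_multiplicationAlgebra_apply_map ι hT
  exact ⟨T', hT', by simp [hext, hTi], fun j hj => by simp [hext, hTj j hj]⟩

lemma HasInnerDual.linearIndependent (hb : HasInnerDual R b) :
    LinearIndependent (Subalgebra.center R W) b := by
  rw [linearIndependent_iff']
  intro s g hg i hi
  obtain ⟨T, hT, hTi, hTj⟩ := hb i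
  have hsum : T (∑ j ∈ s, g j • b j) = g i • 1 := by
    rw [map_sum, Finset.sum_eq_single i _ (absurd hi)]
    · rw [map_center_smul_of_mem_multiplicationAlgebra hT, hTi]
    · intro j _ hj
      rw [map_center_smul_of_mem_multiplicationAlgebra hT, hTj j hj, smul_zero]
  rw [hg, map_zero, Subalgebra.smul_def, smul_eq_mul, mul_one] at hsum
  exact Subtype.ext hsum.symm

end MultiplicationAlgebra

section Azumaya

variable {F W : Type} [Field F] [Ring W] [Algebra F W]

lemma exists_azumayaMap_eq_of_mem_multiplicationAlgebra {T : Module.End F W}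
    (hT : T ∈ multiplicationAlgebra F W) : ∃ t, ∀ x, azumayaMap F W t x = T x := by
  obtain ⟨u, rfl⟩ := hT
  induction u using TensorProduct.induction_on with
  | zero => exact ⟨0, fun x => by simp⟩
  | add u v hu hv =>
    obtain ⟨s, hs⟩ := hu
    obtain ⟨t, ht⟩ := hv
    exact ⟨s + t, fun x => by simp [hs, ht]⟩
  | tmul a b => exact ⟨a ⊗ₜ b, fun x => (AlgHom.mulLeftRight_apply F W a b x).symm⟩

variable {I : Type*} [Finite I]

lemma azumayaMap_surjective (B : Module.Basis I (Subalgebra.center F W) W)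
    (hB : HasInnerDual F B) : Function.Surjective (azumayaMap F W) := by
  have := Fintype.ofFinite I
  intro L
  choose T hT hTi hTj using hB
  choose t ht using fun i => exists_azumayaMap_eq_of_mem_multiplicationAlgebra
    (mul_mem (mulLeft_mem_multiplicationAlgebra (R := F) (L (B i))) (hT i))
  refine ⟨∑ i, t i, B.ext fun j => ?_⟩
  rw [map_sum, LinearMap.sum_apply, Finset.sum_eq_single j _ (by simp)]
  · simp [ht, hTi]
  · intro i _ hij
    simp [ht, hTj i j hij.symm]

-- A surjection between finite free modules of the same rank is injective.
lemma azumayaMap_bijective (B : Module.Basis I (Subalgebra.center F W) W)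
    (hB : HasInnerDual F B) : Function.Bijective (azumayaMap F W) := by
  have hsurj := azumayaMap_surjective B hB
  have := Fintype.ofFinite I
  classical
  let Bop := B.map (MulOpposite.opLinearEquiv (Subalgebra.center F W))
  let e := (B.tensorProduct Bop).equiv (B.linearMap B) (Equiv.refl _)
  have : Module.Finite (Subalgebra.center F W) (W →ₗ[Subalgebra.center F W] W) :=
    Module.Finite.of_basis (B.linearMap B)
  exact ⟨OrzechProperty.injective_of_surjective_of_injective e.toLinearMap (azumayaMap F W)
    e.injective hsurj, hsurj⟩

end Azumaya

/-- The canonical module structure of `W` over its center, as an algebra structure. -/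
abbrev centerAlgebra (R W : Type*) [CommRing R] [Ring W] [Algebra R W] :
    Algebra (Subalgebra.center R W) W :=
  inferInstanceAs (Algebra (Subring.center W) W)

section StandardIdentity

lemma freeAlgebra_basisFreeMonoid_apply (R : Type*) [CommRing R] {X : Type*} (w : FreeMonoid X) :
    FreeAlgebra.basisFreeMonoid R X w = (w.toList.map (FreeAlgebra.ι R)).prod := by
  simp [FreeAlgebra.basisFreeMonoid, FreeAlgebra.equivMonoidAlgebraFreeMonoid,
    FreeMonoid.lift_apply]

/-- The standard polynomial `∑ σ, sign σ • x_{σ 0} ⋯ x_{σ (m - 1)}` in `m` noncommuting variables,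
encoded as the alternatization of the `m`-fold product. -/
noncomputable def standardPolynomial (R : Type*) [CommRing R] (m : ℕ) : FreeAlgebra R (Fin m) :=
  (MultilinearMap.mkPiAlgebraFin R m (FreeAlgebra R (Fin m))).alternatization (FreeAlgebra.ι R)

lemma standardPolynomial_ne_zero (R : Type*) [CommRing R] [Nontrivial R] (m : ℕ) :
    standardPolynomial R m ≠ 0 := by
  let word (σ : Equiv.Perm (Fin m)) : FreeMonoid (Fin m) := FreeMonoid.ofList (List.ofFn σ)
  have word_injective : Function.Injective word := fun σ τ h =>
    Equiv.ext (congrFun (List.ofFn_injective (FreeMonoid.ofList.injective h)))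
  have linearIndependent_word :=
    (FreeAlgebra.basisFreeMonoid R (Fin m)).linearIndependent.comp word word_injective
  have standardPolynomial_eq_sum : standardPolynomial R m =
      ∑ σ, ((σ.sign : ℤ) : R) • FreeAlgebra.basisFreeMonoid R (Fin m) (word σ) := by
    simp [standardPolynomial, MultilinearMap.alternatization_apply, word, Units.smul_def,
      freeAlgebra_basisFreeMonoid_apply, List.map_ofFn, Function.comp_def, Int.cast_smul_eq_zsmul]
  intro h
  have := Fintype.linearIndependent_iff.mp linearIndependent_word _
    (standardPolynomial_eq_sum.symm.trans h) 1
  simp at this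

lemma lift_standardPolynomial_eq_zero (R : Type*) {Z A I : Type*} [CommRing R] [CommRing Z]
    [Ring A] [Algebra R A] [Algebra Z A] [Fintype I] (B : Module.Basis I Z A) {m : ℕ}
    (hm : Fintype.card I < m) (v : Fin m → A) :
    FreeAlgebra.lift R v (standardPolynomial R m) = 0 := by
  have alternatization_eq_zero : (MultilinearMap.mkPiAlgebraFin Z m A).alternatization = 0 :=
    B.ext_alternating fun w hw =>
      absurd (Fintype.card_le_of_injective w hw) (by simpa using hm)
  calc FreeAlgebra.lift R v (standardPolynomial R m)
      = (MultilinearMap.mkPiAlgebraFin Z m A).alternatization v := by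
        simp [standardPolynomial, MultilinearMap.alternatization_apply, Units.smul_def,
          map_list_prod, List.map_ofFn, Function.comp_def]
    _ = 0 := by rw [alternatization_eq_zero, AlternatingMap.zero_apply]

lemma isPIAlgebra_of_basis_center {R A : Type} {I : Type*} [CommRing R] [Nontrivial R] [Ring A]
    [Algebra R A] [Finite I] (B : Module.Basis I (Subalgebra.center R A) A) : IsPIAlgebra R A := by
  have := Fintype.ofFinite I
  let := centerAlgebra R A
  exact ⟨_, standardPolynomial R (Fintype.card I + 1), standardPolynomial_ne_zero R _,
    lift_standardPolynomial_eq_zero R B (Nat.lt_succ_self _)⟩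

end StandardIdentity

section QuotientDivisionRing

variable {R W : Type*} [CommRing R] [Ring W] [Algebra R W]

lemma exists_mul_eq_center [IsDomain W] [Module.Finite (Subalgebra.center R W) W] {c : W}
    (hc : c ≠ 0) : ∃ (c' : W) (z : Subalgebra.center R W), z ≠ 0 ∧ c * c' = z := by
  let := centerAlgebra R W
  obtain ⟨c', -, z, hz, hcz⟩ := IsAlgebraic.exists_nonzero_eq_adjoin_mul
    (Algebra.IsIntegral.isIntegral (R := Subalgebra.center R W) c).isAlgebraic
    (mem_nonZeroDivisors_of_ne_zero hc)
  exact ⟨c', z, hz, hcz⟩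

variable {Q : Type*} [DivisionRing Q] [Algebra R Q] {ι : W →ₐ[R] Q}

lemma map_mem_center_of_forall_eq_mul_inv
    (hQ : ∀ q : Q, ∃ a b : W, b ≠ 0 ∧ q = ι a * (ι b)⁻¹) (z : Subalgebra.center R W) :
    ι z ∈ Subalgebra.center R Q := by
  have commute_map (w : W) : Commute (ι w) (ι z) :=
    Commute.map (Subalgebra.mem_center_iff.mp z.2 w) ι
  refine Subalgebra.mem_center_iff.mpr fun q => ?_
  obtain ⟨a, c, -, rfl⟩ := hQ q
  exact (commute_map a).mul_left (commute_map c).inv_left₀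

lemma exists_eq_inv_center_mul_map [IsDomain W] [Module.Finite (Subalgebra.center R W) W]
    (hι : Function.Injective ι) (hQ : ∀ q : Q, ∃ a b : W, b ≠ 0 ∧ q = ι a * (ι b)⁻¹) (q : Q) :
    ∃ (z : Subalgebra.center R W) (w : W), q = (ι z)⁻¹ * ι w := by
  obtain ⟨a, c, hc, rfl⟩ := hQ q
  obtain ⟨c', z, hz, hcz⟩ := exists_mul_eq_center (R := R) hc
  have hιc : ι c ≠ 0 := (map_ne_zero_iff ι hι).mpr hc
  have hιz : ι z ≠ 0 := (map_ne_zero_iff ι hι).mpr (by simpa using hz)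
  have hcz' : ι c * ι c' = ι z := by rw [← map_mul, hcz]
  have commute_z : Commute (ι z)⁻¹ (ι (a * c')) :=
    Commute.inv_left₀ (Subalgebra.mem_center_iff.mp
      (map_mem_center_of_forall_eq_mul_inv hQ z) _).symm
  refine ⟨z, a * c', ?_⟩
  rw [commute_z.eq, map_mul, mul_assoc]
  congr 1
  rw [eq_mul_inv_iff_mul_eq₀ hιz, ← hcz', inv_mul_cancel_left₀ hιc]

lemma span_center_comp_eq_top [IsDomain W] [Module.Finite (Subalgebra.center R W) W] {I : Type*}
    {b : I → W} (hb : Submodule.span (Subalgebra.center R W) (Set.range b) = ⊤)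
    (hι : Function.Injective ι) (hQ : ∀ q : Q, ∃ a b : W, b ≠ 0 ∧ q = ι a * (ι b)⁻¹) :
    Submodule.span (Subalgebra.center R Q) (Set.range (ι ∘ b)) = ⊤ := by
  have map_mem_span (w : W) : ι w ∈ Submodule.span (Subalgebra.center R Q) (Set.range (ι ∘ b)) := by
    have hw : w ∈ Submodule.span (Subalgebra.center R W) (Set.range b) := hb ▸ Submodule.mem_top
    induction hw using Submodule.span_induction with
    | mem x hx =>
      obtain ⟨i, rfl⟩ := hx
      exact Submodule.subset_span ⟨i, rfl⟩
    | zero => simp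
    | add x y _ _ hx hy => simpa using add_mem hx hy
    | smul z x _ hx =>
      simpa [Subalgebra.smul_def] using
        Submodule.smul_mem _ (⟨ι z, map_mem_center_of_forall_eq_mul_inv hQ z⟩ :
          Subalgebra.center R Q) hx
  refine eq_top_iff.mpr fun q _ => ?_
  obtain ⟨z, w, rfl⟩ := exists_eq_inv_center_mul_map hι hQ q
  have hz := map_mem_center_of_forall_eq_mul_inv hQ z
  exact Submodule.smul_mem _ (⟨(ι z)⁻¹, Set.inv_mem_center hz⟩ : Subalgebra.center R Q)
    (map_mem_span w)

lemma finrank_center_eq_card_of_forall_eq_mul_inv [IsDomain W] {I : Type*} [Fintype I]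
    (B : Module.Basis I (Subalgebra.center R W) W) (hB : HasInnerDual R B)
    (hι : Function.Injective ι) (hQ : ∀ q : Q, ∃ a b : W, b ≠ 0 ∧ q = ι a * (ι b)⁻¹) :
    Module.finrank (Subalgebra.center R Q) Q = Fintype.card I := by
  have := Module.Finite.of_basis B
  exact Module.finrank_eq_card_basis (Module.Basis.mk (hB.map ι).linearIndependent
    (span_center_comp_eq_top B.span_eq hι hQ).ge)

end QuotientDivisionRing

section PartialDerivatives

open MvPolynomial

variable {R σ : Type*} [CommRing R]

variable (R) in
/-- The partial derivative `∂ᵢ`, as an element of the algebra of linear endomorphisms. -/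
noncomputable abbrev pderivEnd (i : σ) : Module.End R (MvPolynomial σ R) :=
  (pderiv i).toLinearMap

lemma commute_mulLeft_mulLeft (f g : MvPolynomial σ R) :
    Commute (LinearMap.mulLeft R f) (LinearMap.mulLeft R g) :=
  LinearMap.ext fun h => mul_left_comm f g h

lemma pderivEnd_mul_mulLeft_X [DecidableEq σ] (i j : σ) :
    pderivEnd R i * LinearMap.mulLeft R (X j) =
      LinearMap.mulLeft R (X j) * pderivEnd R i + if i = j then 1 else 0 := by
  refine LinearMap.ext fun f => ?_
  split_ifs with h
  · simp [h]
  · simp [pderiv_X_of_ne (Ne.symm h)]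

lemma commute_pderivEnd_mulLeft_X {i j : σ} (h : i ≠ j) :
    Commute (pderivEnd R i) (LinearMap.mulLeft R (X j)) := by
  classical
  rw [commute_iff_eq, pderivEnd_mul_mulLeft_X, if_neg h, add_zero]

lemma commute_pderivEnd (i j : σ) : Commute (pderivEnd R i) (pderivEnd R j) := by
  classical
  have lie_eq_zero : ⁅pderiv (R := R) i, pderiv j⁆ = 0 := derivation_ext fun k => by
    rw [Derivation.commutator_apply, pderiv_X, pderiv_X]
    simp only [Pi.single_apply, apply_ite, map_zero, pderiv_one, ite_self, sub_self,
      Derivation.zero_apply]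
  rw [commute_iff_lie_eq, ← Derivation.commutator_coe_linear_map, lie_eq_zero]
  rfl

lemma pderivEnd_pow_monomial (i : σ) (k : ℕ) (m : σ →₀ ℕ) (c : R) :
    (pderivEnd R i ^ k) (monomial m c) =
      monomial (m - Finsupp.single i k) (c * (m i).descFactorial k) := by
  induction k with
  | zero => simp
  | succ k ih =>
    rw [pow_succ', Module.End.mul_apply, ih, Derivation.coeFn_coe, pderiv_monomial,
      tsub_tsub, ← Finsupp.single_add]
    simp [Nat.descFactorial_succ, mul_comm, mul_left_comm]

lemma totalDegree_pderiv_le (i : σ) (f : MvPolynomial σ R) :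
    (pderiv i f).totalDegree ≤ f.totalDegree := by
  refine Finset.sup_le fun m hm => ?_
  rw [mem_support_iff, coeff_pderiv] at hm
  have hle := le_totalDegree (mem_support_iff.mpr (left_ne_zero_of_mul hm))
  exact (Finsupp.degree_mono (a := m) le_self_add).trans hle

variable (R) in
/-- On monomials of degree less than `p` in `Xᵢ`, the operator `-∂ᵢ^(p-1) Xᵢ^(p-1-a)` extracts the
coefficient of `Xᵢ^a`, because `(p-1)! = -1`. -/
noncomputable def coeffOperator (p : ℕ) (i : σ) (a : ℕ) :
    Module.End R (MvPolynomial σ R) :=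
  -(pderivEnd R i ^ (p - 1) * LinearMap.mulLeft R (X i ^ (p - 1 - a)))

lemma coeffOperator_mem {D : Subalgebra R (Module.End R (MvPolynomial σ R))}
    (hX : ∀ i, LinearMap.mulLeft R (X i) ∈ D) (hpderiv : ∀ i, pderivEnd R i ∈ D)
    (p : ℕ) (i : σ) (a : ℕ) : coeffOperator R p i a ∈ D := by
  refine neg_mem (mul_mem (pow_mem (hpderiv i) _) ?_)
  rw [← LinearMap.pow_mulLeft]
  exact pow_mem (hX i) _

lemma monomial_eq_expand_mul_monomial (p : ℕ) (m : σ →₀ ℕ) (c : R) :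
    monomial m c = expand p (monomial (m.mapRange (· / p) (Nat.zero_div p)) c) *
      monomial (m.mapRange (· % p) (Nat.zero_mod p)) 1 := by
  have hm : m = p • m.mapRange (· / p) (Nat.zero_div p) + m.mapRange (· % p) (Nat.zero_mod p) :=
    Finsupp.ext fun i => by simp [Nat.div_add_mod]
  rw [expand_monomial, monomial_mul, mul_one, ← hm]

end PartialDerivatives

section DegreeFiltration

open MvPolynomial

variable {R σ : Type*} [CommRing R]

variable (R σ) in
/-- Polynomials of total degree less than `k`. For `k = 0` this is the zero submodule. -/
noncomputable def totalDegreeLT (k : ℕ) : Submodule R (MvPolynomial σ R) :=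
  restrictSupport R {m | m.degree < k}

lemma totalDegreeLT_mono {k l : ℕ} (h : k ≤ l) : totalDegreeLT R σ k ≤ totalDegreeLT R σ l :=
  restrictSupport_mono _ fun _ hm => lt_of_lt_of_le hm h

lemma mem_totalDegreeLT_succ {k : ℕ} {f : MvPolynomial σ R} :
    f ∈ totalDegreeLT R σ (k + 1) ↔ f.totalDegree ≤ k := by
  rw [totalDegreeLT, mem_restrictSupport_iff, totalDegree, Finset.sup_le_iff]
  exact forall₂_congr fun m _ => Nat.lt_succ_iff

lemma X_mul_mem_totalDegreeLT {k : ℕ} (i : σ) {f : MvPolynomial σ R}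
    (hf : f ∈ totalDegreeLT R σ k) : X i * f ∈ totalDegreeLT R σ (k + 1) := by
  cases k with
  | zero =>
    have : f = 0 := by simpa [totalDegreeLT, mem_restrictSupport_iff] using hf
    simp [this]
  | succ k =>
    rw [mem_totalDegreeLT_succ] at hf ⊢
    have hX : (X i : MvPolynomial σ R).totalDegree ≤ 1 :=
      (totalDegree_monomial_le _ _).trans_eq (by simp)
    calc (X i * f).totalDegree
        ≤ (X i : MvPolynomial σ R).totalDegree + f.totalDegree := totalDegree_mul _ _
      _ ≤ k + 1 := by lia

lemma notMem_totalDegreeLT_totalDegree {f : MvPolynomial σ R} (hf : f ≠ 0) :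
    f ∉ totalDegreeLT R σ f.totalDegree := by
  intro h
  obtain ⟨m, hm, hm_deg⟩ := Finset.exists_mem_eq_sup f.support (support_nonempty.mpr hf)
    (fun m => m.sum fun _ e => e)
  exact ((mem_restrictSupport_iff R).mp h hm).ne hm_deg.symm

lemma totalDegree_le_induction {motive : ℕ → MvPolynomial σ R → Prop}
    (C : ∀ d a, motive d (C a))
    (add : ∀ d f g, motive d f → motive d g → motive d (f + g))
    (X_mul : ∀ d i f, f.totalDegree ≤ d → motive d f → motive (d + 1) (X i * f))
    {d : ℕ} {f : MvPolynomial σ R} (hf : f.totalDegree ≤ d) : motive d f := by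
  have monomial_of_degree_le (d : ℕ) :
      ∀ (m : σ →₀ ℕ) (c : R), m.degree ≤ d → motive d (monomial m c) := by
    induction d with
    | zero =>
      intro m c hm
      rw [Nat.le_zero, Finsupp.degree_eq_zero_iff] at hm
      exact hm ▸ C 0 c
    | succ d ih =>
      intro m c hm
      rcases eq_or_ne m 0 with rfl | hm0
      · exact C (d + 1) c
      obtain ⟨i, hi⟩ := Finsupp.ne_iff.mp hm0
      obtain ⟨m, rfl⟩ : ∃ m', m = Finsupp.single i 1 + m' := exists_add_of_le
        (Finsupp.single_le_iff.mpr (Nat.one_le_iff_ne_zero.mpr hi))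
      have hm' : m.degree ≤ d := by
        rw [map_add, Finsupp.degree_single] at hm
        lia
      rw [monomial_single_add, pow_one]
      exact X_mul d i _ ((totalDegree_monomial_le m c).trans hm') (ih m c hm')
  rw [f.as_sum]
  exact Finset.sum_induction _ (motive d) (add d) (by simpa using C d 0) fun m hm =>
    monomial_of_degree_le d m _ ((le_totalDegree hm).trans hf)

end DegreeFiltration

section CharP

open MvPolynomial

variable {R σ : Type*} [CommRing R] (p : ℕ) [Fact p.Prime] [CharP R p]

lemma exists_expand_eq_of_forall_pderiv_eq_zero {f : MvPolynomial σ R}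
    (hf : ∀ i, pderiv i f = 0) : ∃ g, expand p g = f := by
  have dvd_of_mem_support {m : σ →₀ ℕ} (hm : m ∈ f.support) (i : σ) : p ∣ m i := by
    by_contra hdvd
    have hmi : 1 ≤ m i := Nat.one_le_iff_ne_zero.mpr fun h => hdvd (h ▸ dvd_zero p)
    have hcoeff : coeff m f * (m i : R) = 0 := by
      have := congrArg (coeff (m - Finsupp.single i 1)) (hf i)
      rwa [coeff_pderiv, tsub_add_cancel_of_le (Finsupp.single_le_iff.mpr hmi),
        Finsupp.tsub_apply, Finsupp.single_eq_same, ← Nat.cast_add_one, Nat.sub_add_cancel hmi,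
        coeff_zero] at this
    exact mem_support_iff.mp hm
      (((CharP.isUnit_natCast_iff Fact.out).mpr hdvd).mul_left_eq_zero.mp hcoeff)
  suffices f ∈ (expand p : MvPolynomial σ R →ₐ[R] _).range from this
  rw [f.as_sum]
  refine sum_mem fun m hm => ⟨monomial (m.mapRange (· / p) (Nat.zero_div p)) (coeff m f), ?_⟩
  have hm_eq : p • m.mapRange (· / p) (Nat.zero_div p) = m :=
    Finsupp.ext fun i => by simpa using Nat.mul_div_cancel' (dvd_of_mem_support hm i)
  exact (expand_monomial ..).trans (by rw [hm_eq])

lemma natCast_descFactorial_eq_ite {k a : ℕ} (hk : k < p) (ha : a < p) :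
    ((k + (p - 1 - a)).descFactorial (p - 1) : R) = if k = a then -1 else 0 := by
  have hp : p.Prime := Fact.out
  rcases lt_trichotomy k a with hka | rfl | hka
  · rw [if_neg hka.ne, Nat.descFactorial_of_lt (by lia), Nat.cast_zero]
  · have wilson := congrArg (ZMod.castHom dvd_rfl R) (ZMod.wilsons_lemma p)
    rw [map_natCast, map_neg, map_one] at wilson
    rw [if_pos rfl, Nat.add_sub_of_le (by lia), Nat.descFactorial_self, wilson]
  · rw [if_neg hka.ne', CharP.cast_eq_zero_iff R p]
    have dvd_mul : p ∣ (k + (p - 1 - a) - (p - 1)).factorial *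
        (k + (p - 1 - a)).descFactorial (p - 1) := by
      rw [Nat.factorial_mul_descFactorial (by lia), hp.dvd_factorial]
      lia
    refine (hp.dvd_mul.mp dvd_mul).resolve_left ?_
    rw [hp.dvd_factorial]
    lia

lemma coeffOperator_monomial (i : σ) {a : ℕ} (ha : a < p) {m : σ →₀ ℕ} (hm : m i < p) (c : R) :
    coeffOperator R p i a (monomial m c) = if m i = a then monomial (m.erase i) c else 0 := by
  classical
  have hX : X i ^ (p - 1 - a) * monomial m c =
      monomial (m + Finsupp.single i (p - 1 - a)) c := by
    rw [X_pow_eq_monomial, monomial_mul, one_mul, add_comm]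
  rw [coeffOperator, LinearMap.neg_apply, Module.End.mul_apply, LinearMap.mulLeft_apply, hX,
    pderivEnd_pow_monomial, Finsupp.add_apply, Finsupp.single_eq_same,
    natCast_descFactorial_eq_ite p hm ha]
  split_ifs with h
  · have hm_erase : m + Finsupp.single i (p - 1 - a) - Finsupp.single i (p - 1) = m.erase i := by
      ext j
      rcases eq_or_ne j i with rfl | hj
      · simp only [Finsupp.tsub_apply, Finsupp.add_apply, Finsupp.single_eq_same,
          Finsupp.erase_same]
        lia
      · simp [hj]
    rw [hm_erase, mul_neg_one, map_neg, neg_neg]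
  · simp

open Classical in
lemma exists_mem_monomial_eq_ite_forall_mem {D : Subalgebra R (Module.End R (MvPolynomial σ R))}
    (hX : ∀ i, LinearMap.mulLeft R (X i) ∈ D) (hpderiv : ∀ i, pderivEnd R i ∈ D)
    {α : σ →₀ ℕ} (hα : ∀ i, α i < p) (s : Finset σ) :
    ∃ T ∈ D, ∀ (m : σ →₀ ℕ) (c : R), (∀ i, m i < p) → T (monomial m c) =
      if ∀ i ∈ s, m i = α i then monomial (m.filter (· ∉ s)) c else 0 := by
  induction s using Finset.induction_on with
  | empty =>
    refine ⟨1, one_mem D, fun m c _ => ?_⟩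
    rw [if_pos (by simp), (Finsupp.filter_eq_self_iff _ m).mpr (by simp), Module.End.one_apply]
  | insert i s hi ih =>
    obtain ⟨T, hT, hTm⟩ := ih
    refine ⟨_, mul_mem (coeffOperator_mem hX hpderiv p i (α i)) hT, fun m c hm => ?_⟩
    have hm_i : m.filter (· ∉ s) i = m i := Finsupp.filter_apply_pos (· ∉ s) m hi
    have erase_filter : (m.filter (· ∉ s)).erase i = m.filter (· ∉ insert i s) := by
      ext j
      by_cases hj : j = i <;> by_cases hs : j ∈ s <;> simp_all
    rw [Module.End.mul_apply, hTm m c hm, apply_ite (coeffOperator R p i (α i)), map_zero,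
      coeffOperator_monomial p i (hα i) (hm_i ▸ hm i), hm_i, erase_filter, ← ite_and]
    simp only [Finset.forall_mem_insert, and_comm]

lemma exists_mem_monomial_eq_one_and_forall_ne [Finite σ]
    {D : Subalgebra R (Module.End R (MvPolynomial σ R))}
    (hX : ∀ i, LinearMap.mulLeft R (X i) ∈ D) (hpderiv : ∀ i, pderivEnd R i ∈ D)
    {α : σ →₀ ℕ} (hα : ∀ i, α i < p) :
    ∃ T ∈ D, T (monomial α 1) = 1 ∧
      ∀ m : σ →₀ ℕ, (∀ i, m i < p) → m ≠ α → T (monomial m 1) = 0 := by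
  classical
  have := Fintype.ofFinite σ
  obtain ⟨T, hT, hTm⟩ := exists_mem_monomial_eq_ite_forall_mem p hX hpderiv hα Finset.univ
  refine ⟨T, hT, ?_, fun m hm hne => ?_⟩
  · rw [hTm α 1 hα, if_pos (by simp), (Finsupp.filter_eq_zero_iff _ α).mpr (by simp)]
    rfl
  · rw [hTm m 1 hm, if_neg fun h => hne (Finsupp.ext fun i => h i (Finset.mem_univ i))]

end CharP

section CommutingEvaluation

open MvPolynomial
open scoped IsMulCommutative

variable {R A σ : Type*} [CommRing R] [Ring A] [Algebra R A] (a : σ → A)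
  (ha : ∀ i j, Commute (a i) (a j))

/-- Evaluation of a polynomial at pairwise commuting elements of a possibly noncommutative
algebra. -/
noncomputable def commutingAeval : MvPolynomial σ R →ₐ[R] A :=
  have : IsMulCommutative (Algebra.adjoin R (Set.range a)) :=
    Algebra.isMulCommutative_adjoin R <| by
      rintro _ ⟨i, rfl⟩ _ ⟨j, rfl⟩
      exact ha i j
  (Algebra.adjoin R (Set.range a)).val.comp
    (aeval fun i => ⟨a i, Algebra.subset_adjoin ⟨i, rfl⟩⟩)

lemma commutingAeval_X (i : σ) : commutingAeval (R := R) a ha (X i) = a i := by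
  simp [commutingAeval]

end CommutingEvaluation

namespace WeylAlgebra

section Presentation

variable {R : Type} [CommRing R] {n : ℕ}

lemma commute_X_X (i j : Fin n) : Commute (X i : WeylAlgebra R n) (X j) := by
  have := RingQuot.mkRingHom_rel (WeylRel.xx (R := R) i j)
  rwa [map_mul, map_mul] at this

lemma commute_Y_Y (i j : Fin n) : Commute (Y i : WeylAlgebra R n) (Y j) := by
  have := RingQuot.mkRingHom_rel (WeylRel.yy (R := R) i j)
  rwa [map_mul, map_mul] at this

lemma Y_mul_X (i j : Fin n) :
    (Y i * X j : WeylAlgebra R n) = X j * Y i + if i = j then 1 else 0 := by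
  have := RingQuot.mkRingHom_rel (WeylRel.yx (R := R) i j)
  rwa [map_mul, map_add, map_mul, apply_ite (RingQuot.mkRingHom _), map_one, map_zero] at this

lemma adjoin_range_X_union_range_Y :
    Algebra.adjoin R (Set.range X ∪ Set.range Y : Set (WeylAlgebra R n)) = ⊤ := by
  have := congrArg (Subalgebra.map (RingQuot.mkAlgHom R (WeylRel R n)))
    (FreeAlgebra.adjoin_range_ι R (Fin n ⊕ Fin n))
  rw [Algebra.map_top, AlgHom.map_adjoin, ← Set.range_comp] at this
  refine Eq.trans ?_ (this.trans ((AlgHom.range_eq_top _).mpr (RingQuot.mkAlgHom_surjective R _)))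
  rw [← Set.Sum.elim_range]
  congr 2
  ext (i | i)
  · exact (RingHom.congr_fun (RingQuot.mkAlgHom_coe R _) _).symm
  · exact (RingHom.congr_fun (RingQuot.mkAlgHom_coe R _) _).symm

lemma induction {motive : WeylAlgebra R n → Prop}
    (algebraMap : ∀ r, motive (algebraMap R (WeylAlgebra R n) r))
    (X : ∀ i, motive (WeylAlgebra.X i)) (Y : ∀ i, motive (WeylAlgebra.Y i))
    (add : ∀ v w, motive v → motive w → motive (v + w))
    (mul : ∀ v w, motive v → motive w → motive (v * w)) (w : WeylAlgebra R n) : motive w := by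
  have hw : w ∈ Algebra.adjoin R (Set.range WeylAlgebra.X ∪ Set.range WeylAlgebra.Y :
      Set (WeylAlgebra R n)) := by
    rw [adjoin_range_X_union_range_Y]
    exact Algebra.mem_top
  induction hw using Algebra.adjoin_induction with
  | mem w hw => rcases hw with ⟨i, rfl⟩ | ⟨i, rfl⟩ <;> apply_assumption
  | algebraMap r => exact algebraMap r
  | add v w _ _ hv hw => exact add v w hv hw
  | mul v w _ _ hv hw => exact mul v w hv hw

variable {A : Type*} [Ring A] [Algebra R A]

lemma commute_map_of_commute_map_X_Y {f : WeylAlgebra R n →ₐ[R] A} {a : A}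
    (hX : ∀ i, Commute a (f (X i))) (hY : ∀ i, Commute a (f (Y i))) (w : WeylAlgebra R n) :
    Commute a (f w) := by
  induction w using WeylAlgebra.induction with
  | algebraMap r => rw [AlgHom.commutes]; exact (Algebra.commutes r a).symm
  | X i => exact hX i
  | Y i => exact hY i
  | add v w hv hw => rw [map_add]; exact hv.add_right hw
  | mul v w hv hw => rw [map_mul]; exact hv.mul_right hw

variable {x y : Fin n → A} (hx : ∀ i j, Commute (x i) (x j)) (hy : ∀ i j, Commute (y i) (y j))
  (hyx : ∀ i j, y i * x j = x j * y i + if i = j then 1 else 0)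

/-- The universal property of the Weyl algebra: the homomorphism determined by a family of
elements satisfying the Weyl relations. -/
noncomputable def lift : WeylAlgebra R n →ₐ[R] A :=
  RingQuot.liftAlgHom R ⟨FreeAlgebra.lift R (Sum.elim x y), by
    rintro _ _ (⟨i, j⟩ | ⟨i, j⟩ | ⟨i, j⟩)
    · simpa using (hx i j).eq
    · simpa using (hy i j).eq
    · simpa [apply_ite] using hyx i j⟩

lemma lift_X (i : Fin n) : lift (R := R) hx hy hyx (X i) = x i := by
  rw [X, ← RingQuot.mkAlgHom_coe R]
  exact (RingQuot.liftAlgHom_mkAlgHom_apply R _ _ _).trans (by simp)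

lemma lift_Y (i : Fin n) : lift (R := R) hx hy hyx (Y i) = y i := by
  rw [Y, ← RingQuot.mkAlgHom_coe R]
  exact (RingQuot.liftAlgHom_mkAlgHom_apply R _ _ _).trans (by simp)

end Presentation

section NormalOrdering

open MvPolynomial hiding X

variable {R : Type} [CommRing R] {n : ℕ}

variable (R n) in
/-- The left regular representation of the Weyl algebra in normally ordered coordinates: `xᵢ` acts
on `R[x, y]` by multiplication by `xᵢ`, and `yᵢ` by `yᵢ + ∂/∂xᵢ`. -/
noncomputable def polynomialRep :
    WeylAlgebra R n →ₐ[R] Module.End R (MvPolynomial (Fin n ⊕ Fin n) R) :=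
  lift (x := fun i => LinearMap.mulLeft R (MvPolynomial.X (Sum.inl i)))
    (y := fun i => LinearMap.mulLeft R (MvPolynomial.X (Sum.inr i)) + pderivEnd R (Sum.inl i))
    (fun _ _ => commute_mulLeft_mulLeft _ _)
    (fun _ _ => ((commute_mulLeft_mulLeft _ _).add_right
      (commute_pderivEnd_mulLeft_X Sum.inl_ne_inr).symm).add_left
      ((commute_pderivEnd_mulLeft_X Sum.inl_ne_inr).add_right (commute_pderivEnd _ _)))
    (fun i j => by
      rw [add_mul, pderivEnd_mul_mulLeft_X, (commute_mulLeft_mulLeft _ _).eq, mul_add, add_assoc]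
      simp only [Sum.inl.injEq])

lemma polynomialRep_X (i : Fin n) :
    polynomialRep R n (X i) = LinearMap.mulLeft R (MvPolynomial.X (Sum.inl i)) :=
  lift_X _ _ _ i

lemma polynomialRep_Y (i : Fin n) :
    polynomialRep R n (Y i) =
      LinearMap.mulLeft R (MvPolynomial.X (Sum.inr i)) + pderivEnd R (Sum.inl i) :=
  lift_Y _ _ _ i

lemma commute_mulLeft_X_inr_polynomialRep (i : Fin n) (w : WeylAlgebra R n) :
    Commute (LinearMap.mulLeft R (MvPolynomial.X (Sum.inr i))) (polynomialRep R n w) := by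
  refine commute_map_of_commute_map_X_Y (fun j => ?_) (fun j => ?_) w
  · rw [polynomialRep_X]
    exact commute_mulLeft_mulLeft _ _
  · rw [polynomialRep_Y]
    exact (commute_mulLeft_mulLeft _ _).add_right
      (commute_pderivEnd_mulLeft_X Sum.inl_ne_inr).symm

lemma polynomialRep_mul_Y_apply (w : WeylAlgebra R n) (i : Fin n)
    (f : MvPolynomial (Fin n ⊕ Fin n) R) :
    polynomialRep R n (w * Y i) f = MvPolynomial.X (Sum.inr i) * polynomialRep R n w f +
      polynomialRep R n w (pderiv (Sum.inl i) f) := by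
  have := LinearMap.congr_fun (commute_mulLeft_X_inr_polynomialRep i w).eq f
  simp only [Module.End.mul_apply, LinearMap.mulLeft_apply] at this
  rw [map_mul, polynomialRep_Y, Module.End.mul_apply, LinearMap.add_apply, map_add,
    LinearMap.mulLeft_apply, this, Derivation.coeFn_coe]

lemma commute_mulLeft_X_inl_add_pderivEnd_polynomialRep (i : Fin n) (w : WeylAlgebra R n) :
    Commute (LinearMap.mulLeft R (MvPolynomial.X (Sum.inl i)) + pderivEnd R (Sum.inr i))
      (polynomialRep R n w) := by
  refine commute_map_of_commute_map_X_Y (fun j => ?_) (fun j => ?_) w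
  · rw [polynomialRep_X]
    exact (commute_mulLeft_mulLeft _ _).add_left (commute_pderivEnd_mulLeft_X Sum.inr_ne_inl)
  · rw [polynomialRep_Y, commute_iff_eq, add_mul, mul_add, mul_add, add_mul, mul_add, mul_add,
      pderivEnd_mul_mulLeft_X, pderivEnd_mul_mulLeft_X, (commute_pderivEnd _ _).eq,
      (commute_mulLeft_mulLeft _ _).eq]
    simp only [Sum.inl.injEq, Sum.inr.injEq, eq_comm (a := j)]
    abel

variable (R n) in
/-- The normally ordered monomials `x^α y^β`, extended linearly: `inl i` evaluates to left
multiplication by `xᵢ` and `inr i` to right multiplication by `yᵢ`, and these operators commute. -/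
noncomputable def normalOrder : MvPolynomial (Fin n ⊕ Fin n) R →ₗ[R] WeylAlgebra R n :=
  LinearMap.applyₗ 1 ∘ₗ (commutingAeval
    (Sum.elim (fun i => LinearMap.mulLeft R (X i)) (fun i => LinearMap.mulRight R (Y i))) (by
      rintro (i | i) (j | j)
      · exact LinearMap.ext fun w => by simp [← mul_assoc, (commute_X_X i j).eq]
      · exact LinearMap.commute_mulLeft_right _ _
      · exact (LinearMap.commute_mulLeft_right _ _).symm
      · exact LinearMap.ext fun w => by simp [mul_assoc, (commute_Y_Y i j).eq])).toLinearMap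

lemma normalOrder_C (r : R) : normalOrder R n (C r) = algebraMap R _ r := by
  simp [normalOrder, ← algebraMap_eq, Algebra.algebraMap_eq_smul_one]

lemma normalOrder_X_inl_mul (i : Fin n) (f : MvPolynomial (Fin n ⊕ Fin n) R) :
    normalOrder R n (MvPolynomial.X (Sum.inl i) * f) = X i * normalOrder R n f := by
  simp [normalOrder, commutingAeval_X]

lemma normalOrder_X_inr_mul (i : Fin n) (f : MvPolynomial (Fin n ⊕ Fin n) R) :
    normalOrder R n (MvPolynomial.X (Sum.inr i) * f) = normalOrder R n f * Y i := by
  simp [normalOrder, commutingAeval_X]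

lemma Y_mul_normalOrder (i : Fin n) (f : MvPolynomial (Fin n ⊕ Fin n) R) :
    Y i * normalOrder R n f =
      normalOrder R n f * Y i + normalOrder R n (pderiv (Sum.inl i) f) := by
  induction f using MvPolynomial.induction_on with
  | C r => simp [normalOrder_C, Algebra.commutes]
  | add f g hf hg => simp only [map_add, mul_add, add_mul, hf, hg]; abel
  | mul_X f j hf =>
    rw [mul_comm f]
    rcases j with j | j
    · rw [Derivation.leibniz, smul_eq_mul, smul_eq_mul, map_add, normalOrder_X_inl_mul,
        normalOrder_X_inl_mul, ← mul_assoc, Y_mul_X, add_mul, mul_assoc, hf, mul_add, pderiv_X]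
      rcases eq_or_ne i j with rfl | h
      · simp [mul_assoc, add_assoc]
      · simp [mul_assoc, h, h.symm]
    · rw [Derivation.leibniz, smul_eq_mul, smul_eq_mul, map_add, normalOrder_X_inr_mul,
        normalOrder_X_inr_mul, ← mul_assoc, hf, add_mul, mul_assoc, (commute_Y_Y i j).eq,
        ← mul_assoc, pderiv_X_of_ne Sum.inr_ne_inl, mul_zero, map_zero, add_zero]

lemma normalOrder_polynomialRep (w : WeylAlgebra R n) (f : MvPolynomial (Fin n ⊕ Fin n) R) :
    normalOrder R n (polynomialRep R n w f) = w * normalOrder R n f := by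
  induction w using WeylAlgebra.induction generalizing f with
  | algebraMap r => rw [AlgHom.commutes, Module.algebraMap_end_apply, map_smul, Algebra.smul_def]
  | X i => rw [polynomialRep_X, LinearMap.mulLeft_apply, normalOrder_X_inl_mul]
  | Y i =>
    rw [polynomialRep_Y, LinearMap.add_apply, map_add, LinearMap.mulLeft_apply,
      normalOrder_X_inr_mul, Derivation.coeFn_coe, Y_mul_normalOrder]
  | add v w hv hw => rw [map_add, LinearMap.add_apply, map_add, hv, hw, add_mul]
  | mul v w hv hw => rw [map_mul, Module.End.mul_apply, hv, hw, mul_assoc]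

lemma polynomialRep_normalOrder_one (f : MvPolynomial (Fin n ⊕ Fin n) R) :
    polynomialRep R n (normalOrder R n f) 1 = f := by
  induction f using MvPolynomial.induction_on with
  | C r =>
    rw [normalOrder_C, AlgHom.commutes, Module.algebraMap_end_apply, smul_eq_C_mul, mul_one]
  | add f g hf hg => rw [map_add, map_add, LinearMap.add_apply, hf, hg]
  | mul_X f j hf =>
    rw [mul_comm f]
    rcases j with i | i
    · rw [normalOrder_X_inl_mul, map_mul, polynomialRep_X, Module.End.mul_apply, hf,
        LinearMap.mulLeft_apply]
    · rw [normalOrder_X_inr_mul, polynomialRep_mul_Y_apply, hf, pderiv_one, map_zero, add_zero]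

variable (R n) in
/-- The normally ordered symbol of an element of the Weyl algebra: the polynomial obtained by
moving all `yᵢ` to the right of all `xⱼ`. -/
noncomputable def symbol : WeylAlgebra R n ≃ₗ[R] MvPolynomial (Fin n ⊕ Fin n) R where
  __ := LinearMap.applyₗ 1 ∘ₗ (polynomialRep R n).toLinearMap
  invFun := normalOrder R n
  left_inv w := by
    have normalOrder_one : normalOrder R n 1 = 1 := by simpa using normalOrder_C (n := n) (1 : R)
    exact (normalOrder_polynomialRep w 1).trans (by rw [normalOrder_one, mul_one])
  right_inv := polynomialRep_normalOrder_one

lemma symbol_apply (w : WeylAlgebra R n) : symbol R n w = polynomialRep R n w 1 := rfl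

lemma symbol_one : symbol R n 1 = 1 := by simp [symbol_apply]

lemma symbol_mul (v w : WeylAlgebra R n) :
    symbol R n (v * w) = polynomialRep R n v (symbol R n w) := by
  rw [symbol_apply, map_mul, Module.End.mul_apply, symbol_apply]

lemma symbol_X_mul (i : Fin n) (w : WeylAlgebra R n) :
    symbol R n (X i * w) = MvPolynomial.X (Sum.inl i) * symbol R n w := by
  rw [symbol_mul, polynomialRep_X, LinearMap.mulLeft_apply]

lemma symbol_Y_mul (i : Fin n) (w : WeylAlgebra R n) :
    symbol R n (Y i * w) =
      MvPolynomial.X (Sum.inr i) * symbol R n w + pderiv (Sum.inl i) (symbol R n w) := by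
  rw [symbol_mul, polynomialRep_Y, LinearMap.add_apply, LinearMap.mulLeft_apply,
    Derivation.coeFn_coe]

lemma symbol_mul_X (w : WeylAlgebra R n) (i : Fin n) :
    symbol R n (w * X i) =
      MvPolynomial.X (Sum.inl i) * symbol R n w + pderiv (Sum.inr i) (symbol R n w) := by
  have := LinearMap.congr_fun (commute_mulLeft_X_inl_add_pderivEnd_polynomialRep i w).eq 1
  simpa [symbol_apply, polynomialRep_X] using this.symm

lemma symbol_mul_Y (w : WeylAlgebra R n) (i : Fin n) :
    symbol R n (w * Y i) = MvPolynomial.X (Sum.inr i) * symbol R n w := by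
  rw [symbol_apply, polynomialRep_mul_Y_apply, pderiv_one, map_zero, add_zero, symbol_apply]

lemma symbol_symm_C (r : R) : (symbol R n).symm (C r) = algebraMap R _ r :=
  normalOrder_C r

lemma symbol_symm_X_inl_mul (i : Fin n) (f : MvPolynomial (Fin n ⊕ Fin n) R) :
    (symbol R n).symm (MvPolynomial.X (Sum.inl i) * f) = X i * (symbol R n).symm f :=
  normalOrder_X_inl_mul i f

lemma symbol_symm_X_inr_mul (i : Fin n) (f : MvPolynomial (Fin n ⊕ Fin n) R) :
    (symbol R n).symm (MvPolynomial.X (Sum.inr i) * f) = (symbol R n).symm f * Y i :=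
  normalOrder_X_inr_mul i f

end NormalOrdering

section Domain

open MvPolynomial hiding X

variable {R : Type} [CommRing R] {n : ℕ}

-- The product of the Weyl algebra, transported to symbols, has the commutative leading term.
lemma polynomialRep_symbol_symm_sub_mul_mem_totalDegreeLT {d e : ℕ}
    {f g : MvPolynomial (Fin n ⊕ Fin n) R} (hf : f.totalDegree ≤ d) (hg : g.totalDegree ≤ e) :
    polynomialRep R n ((symbol R n).symm f) g - f * g ∈ totalDegreeLT R _ (d + e) := by
  refine totalDegree_le_induction
    (motive := fun d f => ∀ g : MvPolynomial (Fin n ⊕ Fin n) R, g.totalDegree ≤ e →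
      polynomialRep R n ((symbol R n).symm f) g - f * g ∈ totalDegreeLT R _ (d + e))
    ?C ?add ?X_mul hf g hg
  case C =>
    intro d r g _
    rw [symbol_symm_C, AlgHom.commutes, Module.algebraMap_end_apply, smul_eq_C_mul, sub_self]
    exact zero_mem _
  case add =>
    intro d f₁ f₂ h₁ h₂ g hg
    rw [map_add, map_add, LinearMap.add_apply, add_mul, add_sub_add_comm]
    exact add_mem (h₁ g hg) (h₂ g hg)
  case X_mul =>
    intro d j f hf ih g hg
    have X_mul_mem : MvPolynomial.X j * (polynomialRep R n ((symbol R n).symm f) g - f * g) ∈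
        totalDegreeLT R _ (d + 1 + e) :=
      add_right_comm d e 1 ▸ X_mul_mem_totalDegreeLT j (ih g hg)
    rcases j with i | i
    · rw [symbol_symm_X_inl_mul, map_mul, polynomialRep_X, Module.End.mul_apply,
        LinearMap.mulLeft_apply, mul_assoc, ← mul_sub]
      exact X_mul_mem
    · have hg' : (pderiv (Sum.inl i) g).totalDegree ≤ e := (totalDegree_pderiv_le _ g).trans hg
      have pderiv_mem := totalDegreeLT_mono (l := d + 1 + e) (by lia) (ih _ hg')
      have mul_pderiv_mem : f * pderiv (Sum.inl i) g ∈ totalDegreeLT R _ (d + 1 + e) := by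
        rw [add_right_comm, mem_totalDegreeLT_succ]
        exact (totalDegree_mul _ _).trans (add_le_add hf hg')
      convert add_mem X_mul_mem (add_mem pderiv_mem mul_pderiv_mem) using 1
      rw [symbol_symm_X_inr_mul, polynomialRep_mul_Y_apply]
      ring

instance instIsDomain [IsDomain R] : IsDomain (WeylAlgebra R n) := by
  have : Nontrivial (WeylAlgebra R n) := (symbol R n).toEquiv.nontrivial
  have : NoZeroDivisors (WeylAlgebra R n) := ⟨fun {v w} hvw => by
    by_contra! ⟨hv, hw⟩
    have hv' : symbol R n v ≠ 0 := (symbol R n).map_ne_zero_iff.mpr hv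
    have hw' : symbol R n w ≠ 0 := (symbol R n).map_ne_zero_iff.mpr hw
    have mem := polynomialRep_symbol_symm_sub_mul_mem_totalDegreeLT
      (le_refl (symbol R n v).totalDegree) (le_refl (symbol R n w).totalDegree)
    rw [LinearEquiv.symm_apply_apply, ← symbol_mul, hvw, map_zero, zero_sub, neg_mem_iff,
      ← totalDegree_mul_of_isDomain hv' hw'] at mem
    exact notMem_totalDegreeLT_totalDegree (mul_ne_zero hv' hw') mem⟩
  exact NoZeroDivisors.to_isDomain _

end Domain

section Center

open MvPolynomial hiding X

variable {R : Type} [CommRing R] {n : ℕ}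

lemma mem_center_iff {w : WeylAlgebra R n} :
    w ∈ Subalgebra.center R (WeylAlgebra R n) ↔ ∀ i, pderiv i (symbol R n w) = 0 := by
  have commute_X_iff (i : Fin n) : Commute w (X i) ↔ pderiv (Sum.inr i) (symbol R n w) = 0 := by
    rw [commute_iff_eq, ← (symbol R n).injective.eq_iff, symbol_mul_X, symbol_X_mul, add_eq_left]
  have commute_Y_iff (i : Fin n) : Commute w (Y i) ↔ pderiv (Sum.inl i) (symbol R n w) = 0 := by
    rw [commute_iff_eq, ← (symbol R n).injective.eq_iff, symbol_mul_Y, symbol_Y_mul, left_eq_add]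
  rw [Sum.forall, Subalgebra.mem_center_iff]
  constructor
  · intro hw
    exact ⟨fun i => (commute_Y_iff i).mp (hw (Y i)).symm,
      fun i => (commute_X_iff i).mp (hw (X i)).symm⟩
  · rintro ⟨hY, hX⟩ v
    exact (commute_map_of_commute_map_X_Y (f := AlgHom.id R _)
      (fun i => (commute_X_iff i).mpr (hX i)) (fun i => (commute_Y_iff i).mpr (hY i)) v).symm

lemma symbol_X_pow_mul (i : Fin n) (k : ℕ) (w : WeylAlgebra R n) :
    symbol R n (X i ^ k * w) = MvPolynomial.X (Sum.inl i) ^ k * symbol R n w := by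
  induction k with
  | zero => simp
  | succ k ih => rw [pow_succ', mul_assoc, symbol_X_mul, ih, pow_succ', mul_assoc]

lemma symbol_mul_Y_pow (w : WeylAlgebra R n) (i : Fin n) (k : ℕ) :
    symbol R n (w * Y i ^ k) = MvPolynomial.X (Sum.inr i) ^ k * symbol R n w := by
  induction k with
  | zero => simp
  | succ k ih => rw [pow_succ, ← mul_assoc, symbol_mul_Y, ih, pow_succ', mul_assoc]

variable (p : ℕ) [CharP R p]

lemma X_pow_mem_center (i : Fin n) : X i ^ p ∈ Subalgebra.center R (WeylAlgebra R n) := by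
  have hX : symbol R n (X i ^ p) = MvPolynomial.X (Sum.inl i) ^ p := by
    simpa [symbol_one] using symbol_X_pow_mul i p (1 : WeylAlgebra R n)
  exact mem_center_iff.mpr fun j => by simp [hX]

lemma Y_pow_mem_center (i : Fin n) : Y i ^ p ∈ Subalgebra.center R (WeylAlgebra R n) := by
  have hY : symbol R n (Y i ^ p) = MvPolynomial.X (Sum.inr i) ^ p := by
    simpa [symbol_one] using symbol_mul_Y_pow (1 : WeylAlgebra R n) i p
  exact mem_center_iff.mpr fun j => by simp [hY]

variable (R n) in
/-- Evaluation of polynomials at the central elements `xᵢᵖ` and `yᵢᵖ`. -/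
noncomputable def evalPowP :
    MvPolynomial (Fin n ⊕ Fin n) R →ₐ[R] Subalgebra.center R (WeylAlgebra R n) :=
  aeval (Sum.elim (fun i => ⟨X i ^ p, X_pow_mem_center p i⟩)
    (fun i => ⟨Y i ^ p, Y_pow_mem_center p i⟩))

lemma evalPowP_X_inl (i : Fin n) :
    (evalPowP R n p (MvPolynomial.X (Sum.inl i)) : WeylAlgebra R n) = X i ^ p := by
  simp [evalPowP]

lemma evalPowP_X_inr (i : Fin n) :
    (evalPowP R n p (MvPolynomial.X (Sum.inr i)) : WeylAlgebra R n) = Y i ^ p := by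
  simp [evalPowP]

lemma symbol_evalPowP_mul (f : MvPolynomial (Fin n ⊕ Fin n) R) (w : WeylAlgebra R n) :
    symbol R n (evalPowP R n p f * w) = expand p f * symbol R n w := by
  induction f using MvPolynomial.induction_on generalizing w with
  | C r =>
    have hC : (evalPowP R n p (C r) : WeylAlgebra R n) = algebraMap R _ r := by
      rw [← algebraMap_eq, AlgHom.commutes, Subalgebra.coe_algebraMap]
    rw [hC, ← Algebra.smul_def, map_smul, expand_C, smul_eq_C_mul]
  | add f g hf hg => rw [map_add, Subalgebra.coe_add, add_mul, map_add, hf, hg, map_add, add_mul]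
  | mul_X f j hf =>
    rw [map_mul (evalPowP R n p), Subalgebra.coe_mul, mul_assoc, hf, map_mul (expand p), expand_X,
      mul_assoc]
    congr 1
    rcases j with i | i
    · rw [evalPowP_X_inl, symbol_X_pow_mul]
    · rw [evalPowP_X_inr, ← Subalgebra.mem_center_iff.mp (Y_pow_mem_center p i) w,
        symbol_mul_Y_pow]

lemma symbol_evalPowP (f : MvPolynomial (Fin n ⊕ Fin n) R) :
    symbol R n (evalPowP R n p f) = expand p f := by
  simpa [symbol_one] using symbol_evalPowP_mul p f (1 : WeylAlgebra R n)

variable [Fact p.Prime]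

lemma evalPowP_bijective : Function.Bijective (evalPowP R n p) := by
  constructor
  · intro f g hfg
    refine expand_injective (Nat.Prime.pos (Fact.out : p.Prime)) ?_
    rw [← symbol_evalPowP, hfg, symbol_evalPowP]
  · intro z
    obtain ⟨f, hf⟩ := exists_expand_eq_of_forall_pderiv_eq_zero p (mem_center_iff.mp z.2)
    exact ⟨f, Subtype.ext ((symbol R n).injective ((symbol_evalPowP p f).trans hf))⟩

variable (R n) in
/-- The center of the Weyl algebra in characteristic `p` is the polynomial algebra in the `xᵢᵖ` and
`yᵢᵖ`. -/
noncomputable def centerEquiv :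
    MvPolynomial (Fin n ⊕ Fin n) R ≃ₐ[R] Subalgebra.center R (WeylAlgebra R n) :=
  AlgEquiv.ofBijective (evalPowP R n p) (evalPowP_bijective p)

end Center

section SymbolMultiplicationAlgebra

open MvPolynomial hiding X

variable {R : Type} [CommRing R] {n : ℕ}

variable (R n) in
/-- The multiplication algebra of the Weyl algebra, transported to operators on polynomials along
the symbol map. -/
noncomputable def symbolMultiplicationAlgebra :
    Subalgebra R (Module.End R (MvPolynomial (Fin n ⊕ Fin n) R)) :=
  (multiplicationAlgebra R (WeylAlgebra R n)).comap
    ((symbol R n).symm.conjAlgEquiv R).toAlgHom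

lemma mem_symbolMultiplicationAlgebra {S : Module.End R (WeylAlgebra R n)}
    (hS : S ∈ multiplicationAlgebra R (WeylAlgebra R n))
    {T : Module.End R (MvPolynomial (Fin n ⊕ Fin n) R)}
    (hST : ∀ w, symbol R n (S w) = T (symbol R n w)) : T ∈ symbolMultiplicationAlgebra R n := by
  have conj_eq : (symbol R n).symm.conjAlgEquiv R T = S := LinearMap.ext fun w =>
    (symbol R n).symm_apply_eq.mpr (hST w).symm
  rw [← conj_eq] at hS
  exact hS

lemma mulLeft_X_mem_symbolMultiplicationAlgebra (i : Fin n ⊕ Fin n) :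
    LinearMap.mulLeft R (MvPolynomial.X i) ∈ symbolMultiplicationAlgebra R n := by
  rcases i with i | i
  · exact mem_symbolMultiplicationAlgebra (mulLeft_mem_multiplicationAlgebra (X i))
      (symbol_X_mul i)
  · exact mem_symbolMultiplicationAlgebra (mulRight_mem_multiplicationAlgebra (Y i))
      (symbol_mul_Y · i)

lemma pderivEnd_mem_symbolMultiplicationAlgebra (i : Fin n ⊕ Fin n) :
    pderivEnd R i ∈ symbolMultiplicationAlgebra R n := by
  rcases i with i | i
  · refine mem_symbolMultiplicationAlgebra (sub_mem (mulLeft_mem_multiplicationAlgebra (Y i))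
      (mulRight_mem_multiplicationAlgebra (Y i))) fun w => ?_
    simp [symbol_Y_mul, symbol_mul_Y]
  · refine mem_symbolMultiplicationAlgebra (sub_mem (mulRight_mem_multiplicationAlgebra (X i))
      (mulLeft_mem_multiplicationAlgebra (X i))) fun w => ?_
    simp [symbol_mul_X, symbol_X_mul]

end SymbolMultiplicationAlgebra

section ReducedMonomials

open MvPolynomial hiding X

variable (R : Type) [CommRing R] (n p : ℕ)

/-- The normally ordered monomials `x^α y^β` all of whose exponents are less than `p`. -/
noncomputable def reducedMonomial (α : Fin n ⊕ Fin n → Fin p) : WeylAlgebra R n :=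
  (symbol R n).symm (monomial (Finsupp.equivFunOnFinite.symm fun i => (α i : ℕ)) 1)

variable [Fact p.Prime] [CharP R p]

lemma span_center_range_reducedMonomial :
    Submodule.span (Subalgebra.center R (WeylAlgebra R n))
      (Set.range (reducedMonomial R n p)) = ⊤ := by
  have hp : 0 < p := Nat.Prime.pos Fact.out
  refine eq_top_iff.mpr fun w _ => ?_
  have symbol_symm_monomial (m : Fin n ⊕ Fin n →₀ ℕ) (c : R) : (symbol R n).symm (monomial m c) =
      evalPowP R n p (monomial (m.mapRange (· / p) (Nat.zero_div p)) c) •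
        reducedMonomial R n p fun i => ⟨m i % p, Nat.mod_lt _ hp⟩ := by
    rw [LinearEquiv.symm_apply_eq, Subalgebra.smul_def, smul_eq_mul, symbol_evalPowP_mul,
      reducedMonomial, LinearEquiv.apply_symm_apply, monomial_eq_expand_mul_monomial p m c]
    congr 3
    exact Finsupp.ext fun i => rfl
  rw [← (symbol R n).symm_apply_apply w, (symbol R n w).as_sum, map_sum]
  refine sum_mem fun m _ => ?_
  rw [symbol_symm_monomial]
  exact Submodule.smul_mem _ _ (Submodule.subset_span ⟨_, rfl⟩)

lemma hasInnerDual_reducedMonomial : HasInnerDual R (reducedMonomial R n p) := by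
  intro α
  obtain ⟨T, hT, hTα, hTm⟩ := exists_mem_monomial_eq_one_and_forall_ne (R := R) p
    mulLeft_X_mem_symbolMultiplicationAlgebra pderivEnd_mem_symbolMultiplicationAlgebra
    (α := Finsupp.equivFunOnFinite.symm fun i => (α i : ℕ)) (fun i => (α i).isLt)
  refine ⟨_, hT, ?_, fun β hβ => ?_⟩
  · simp [reducedMonomial, LinearEquiv.conjAlgEquiv_apply, hTα, LinearEquiv.symm_apply_eq,
      symbol_one]
  · have hne : (Finsupp.equivFunOnFinite.symm fun i => (β i : ℕ)) ≠
        Finsupp.equivFunOnFinite.symm fun i => (α i : ℕ) := fun h =>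
      hβ (funext fun i => Fin.ext (congrFun (Finsupp.equivFunOnFinite.symm.injective h) i))
    simp [reducedMonomial, LinearEquiv.conjAlgEquiv_apply, hTm _ (fun i => (β i).isLt) hne]

/-- The reduced monomials, as a basis of the Weyl algebra over its center. -/
noncomputable def reducedMonomialBasis :
    Module.Basis (Fin n ⊕ Fin n → Fin p) (Subalgebra.center R (WeylAlgebra R n))
      (WeylAlgebra R n) :=
  .mk (hasInnerDual_reducedMonomial R n p).linearIndependent
    (span_center_range_reducedMonomial R n p).ge

lemma hasInnerDual_reducedMonomialBasis : HasInnerDual R (reducedMonomialBasis R n p) := by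
  rw [reducedMonomialBasis, Module.Basis.coe_mk]
  exact hasInnerDual_reducedMonomial R n p

end ReducedMonomials

end WeylAlgebra

theorem weyl_algebra_char_p_azumaya_over_polynomial_center_general
    (F : Type) [Field F] (p : ℕ) (hp : p.Prime) [CharP F p] (n : ℕ) :
    IsDomain (WeylAlgebra F n) ∧
    (∃ e : MvPolynomial (Fin n ⊕ Fin n) F ≃ₐ[F] Subalgebra.center F (WeylAlgebra F n),
      (∀ i : Fin n,
        (e (MvPolynomial.X (Sum.inl i)) : WeylAlgebra F n) = WeylAlgebra.X i ^ p) ∧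
      (∀ i : Fin n,
        (e (MvPolynomial.X (Sum.inr i)) : WeylAlgebra F n) = WeylAlgebra.Y i ^ p)) ∧
    Module.Finite (Subalgebra.center F (WeylAlgebra F n)) (WeylAlgebra F n) ∧
    Module.Projective (Subalgebra.center F (WeylAlgebra F n)) (WeylAlgebra F n) ∧
    Module.finrank (Subalgebra.center F (WeylAlgebra F n)) (WeylAlgebra F n) = (p ^ n) ^ 2 ∧
    Function.Bijective (azumayaMap F (WeylAlgebra F n)) ∧
    IsPIAlgebra F (WeylAlgebra F n) ∧
    (∀ (Q : Type) [DivisionRing Q] [Algebra F Q],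
      ∀ ι : WeylAlgebra F n →ₐ[F] Q, Function.Injective ι →
        (∀ q : Q, ∃ a b : WeylAlgebra F n, b ≠ 0 ∧ q = ι a * (ι b)⁻¹) →
        Module.finrank (Subalgebra.center F Q) Q = (p ^ n) ^ 2) := by
  have := Fact.mk hp
  let B := WeylAlgebra.reducedMonomialBasis F n p
  have hB := WeylAlgebra.hasInnerDual_reducedMonomialBasis F n p
  have card_eq : Fintype.card (Fin n ⊕ Fin n → Fin p) = (p ^ n) ^ 2 := by
    simp [← pow_mul, mul_two]
  exact ⟨inferInstance,
    ⟨WeylAlgebra.centerEquiv F n p, WeylAlgebra.evalPowP_X_inl p, WeylAlgebra.evalPowP_X_inr p⟩,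
    .of_basis B, .of_basis B, (Module.finrank_eq_card_basis B).trans card_eq,
    azumayaMap_bijective B hB, isPIAlgebra_of_basis_center B,
    fun _ _ _ _ hι hQ => (finrank_center_eq_card_of_forall_eq_mul_inv B hB hι hQ).trans card_eq⟩

/-- Let `F` be an algebraically closed field of characteristic `p > 0`.  The Weyl algebra
`A_n(F)` is an Azumaya algebra of degree `pⁿ` over its center (it is a finitely generated
projective module of rank `p^{2n}` over its center and the natural map
`A ⊗_Z Aᵒᵖ → End_Z(A)` is bijective), and its center is the polynomial algebra
`F[x₁ᵖ, …, xₙᵖ, y₁ᵖ, …, yₙᵖ]`.  In particular `A_n(F)` is a PI domain whose quotient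
division algebra has degree `pⁿ`. -/
theorem weyl_algebra_char_p_azumaya_over_polynomial_center
    (F : Type) [Field F] [IsAlgClosed F] (p : ℕ) (hp : p.Prime) [CharP F p] (n : ℕ) :
    IsDomain (WeylAlgebra F n) ∧
    (∃ e : MvPolynomial (Fin n ⊕ Fin n) F ≃ₐ[F] Subalgebra.center F (WeylAlgebra F n),
      (∀ i : Fin n,
        (e (MvPolynomial.X (Sum.inl i)) : WeylAlgebra F n) = WeylAlgebra.X i ^ p) ∧
      (∀ i : Fin n,
        (e (MvPolynomial.X (Sum.inr i)) : WeylAlgebra F n) = WeylAlgebra.Y i ^ p)) ∧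
    Module.Finite (Subalgebra.center F (WeylAlgebra F n)) (WeylAlgebra F n) ∧
    Module.Projective (Subalgebra.center F (WeylAlgebra F n)) (WeylAlgebra F n) ∧
    Module.finrank (Subalgebra.center F (WeylAlgebra F n)) (WeylAlgebra F n) = (p ^ n) ^ 2 ∧
    Function.Bijective (azumayaMap F (WeylAlgebra F n)) ∧
    IsPIAlgebra F (WeylAlgebra F n) ∧
    (∀ (Q : Type) [DivisionRing Q] [Algebra F Q],
      ∀ ι : WeylAlgebra F n →ₐ[F] Q, Function.Injective ι →
        (∀ q : Q, ∃ a b : WeylAlgebra F n, b ≠ 0 ∧ q = ι a * (ι b)⁻¹) →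
        Module.finrank (Subalgebra.center F Q) Q = (p ^ n) ^ 2) := by
  exact weyl_algebra_char_p_azumaya_over_polynomial_center_general F p hp n
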